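/- Assume ĥ_k ≠ 0. Let P and Q be power vectors with strictly positive entries such that Q_j = P_j for all j ≠ k and Q_k > P_k. Then SINR_k(Q) > SINR_k(P); that is, the uplink SINR of user k is strictly increasing in user k's own transmit power. (First part of the competitiveness condition of a competitive utility function.) -/

import Mathlib

open Matrix Finset
open scoped ComplexOrder

noncomputable section

/-- Estimation-error-plus-noise covariance `D(P) = Σⱼ Pⱼ Eⱼ + C_z`. -/
def Dmat {K n : ℕ} (E : Fin K → Matrix (Fin n) (Fin n) ℂ)
    (Cz : Matrix (Fin n) (Fin n) ℂ) (P : Fin K → ℝ) : Matrix (Fin n) (Fin n) ℂ :=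
  (∑ j, (P j : ℂ) • E j) + Cz

/-- Interference-plus-noise covariance of user `k`:
`Ω_k(P) = Σ_{k'≠k} P_{k'} hhat_{k'} hhat_{k'}ᴴ + D(P)`. -/
def Omat {K n : ℕ} (hhat : Fin K → Fin n → ℂ) (E : Fin K → Matrix (Fin n) (Fin n) ℂ)
    (Cz : Matrix (Fin n) (Fin n) ℂ) (k : Fin K) (P : Fin K → ℝ) :
    Matrix (Fin n) (Fin n) ℂ :=
  (∑ k' ∈ Finset.univ.erase k, (P k' : ℂ) • vecMulVec (hhat k') (star (hhat k'))) +
    Dmat E Cz P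

/-- Uplink SINR of user `k`: `SINR_k(P) = P_k · hhat_kᴴ Ω_k(P)⁻¹ hhat_k`. -/
def SINR {K n : ℕ} (hhat : Fin K → Fin n → ℂ) (E : Fin K → Matrix (Fin n) (Fin n) ℂ)
    (Cz : Matrix (Fin n) (Fin n) ℂ) (k : Fin K) (P : Fin K → ℝ) : ℝ :=
  P k * (star (hhat k) ⬝ᵥ (Omat hhat E Cz k P)⁻¹ *ᵥ hhat k).re

/-- Matrix inversion is strictly antitone for the positive definite order: if `Y` and `X - Y` are
positive definite, the quadratic form of `X⁻¹` is strictly below that of `Y⁻¹` off zero. -/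
theorem re_dotProduct_inv_mulVec_lt {ι : Type*} [Fintype ι] [DecidableEq ι]
    {X Y : Matrix ι ι ℂ} (hY : Y.PosDef) (hXY : (X - Y).PosDef) {h : ι → ℂ} (hh : h ≠ 0) :
    (star h ⬝ᵥ X⁻¹ *ᵥ h).re < (star h ⬝ᵥ Y⁻¹ *ᵥ h).re := by
  have hX : X.PosDef := by simpa using hXY.add hY
  have hXdet : IsUnit X.det := (isUnit_iff_isUnit_det X).1 hX.isUnit
  have hYdet : IsUnit Y.det := (isUnit_iff_isUnit_det Y).1 hY.isUnit
  set u := X⁻¹ *ᵥ h with hu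
  set v := Y⁻¹ *ᵥ h with hv
  have hXu : X *ᵥ u = h := by rw [hu, mulVec_mulVec, mul_nonsing_inv _ hXdet, one_mulVec]
  have hYv : Y *ᵥ v = h := by rw [hv, mulVec_mulVec, mul_nonsing_inv _ hYdet, one_mulVec]
  have hu0 : u ≠ 0 := fun h0 => hh (by rw [← hXu, h0, mulVec_zero])
  have hlt := (Complex.lt_def.1 (hXY.dotProduct_mulVec_pos hu0)).1
  have hsq := (Complex.le_def.1 (hY.posSemidef.dotProduct_mulVec_nonneg (u - v))).1
  have hvY : star v ⬝ᵥ Y *ᵥ u = star h ⬝ᵥ u := by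
    rw [← hYv, star_mulVec Y v, hY.isHermitian.eq, dotProduct_mulVec]
  rw [sub_mulVec, hXu, dotProduct_sub, star_dotProduct u h] at hlt
  rw [mulVec_sub, hYv, star_sub, sub_dotProduct, dotProduct_sub, dotProduct_sub, hvY,
    star_dotProduct v h, star_dotProduct u h] at hsq
  simp only [Complex.sub_re, Complex.zero_re, Complex.star_def, Complex.conj_re] at hlt hsq
  linarith

/-- For `R` positive definite and `E` positive semidefinite, `t ↦ t · hᴴ (R + t E)⁻¹ h` is strictly
increasing in `t > 0`. -/
theorem mul_re_dotProduct_inv_add_smul_lt {ι : Type*} [Fintype ι] [DecidableEq ι]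
    {R E : Matrix ι ι ℂ} (hR : R.PosDef) (hE : E.PosSemidef) {h : ι → ℂ} (hh : h ≠ 0)
    {p q : ℝ} (hp : 0 < p) (hpq : p < q) :
    p * (star h ⬝ᵥ (R + (p : ℂ) • E)⁻¹ *ᵥ h).re < q * (star h ⬝ᵥ (R + (q : ℂ) • E)⁻¹ *ᵥ h).re := by
  have key : ∀ t : ℝ, 0 < t → (((t⁻¹ : ℝ) : ℂ) • R + E).PosDef ∧
      t * (star h ⬝ᵥ (R + (t : ℂ) • E)⁻¹ *ᵥ h).re =
        (star h ⬝ᵥ (((t⁻¹ : ℝ) : ℂ) • R + E)⁻¹ *ᵥ h).re := by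
    intro t ht
    have ht' : (t : ℂ) ≠ 0 := by exact_mod_cast ht.ne'
    have hS : (R + (t : ℂ) • E).PosDef :=
      hR.add_posSemidef (hE.smul (by exact_mod_cast ht.le))
    have hdet : IsUnit (R + (t : ℂ) • E).det := (isUnit_iff_isUnit_det _).1 hS.isUnit
    have hscale : ((t⁻¹ : ℝ) : ℂ) • R + E = ((t⁻¹ : ℝ) : ℂ) • (R + (t : ℂ) • E) := by
      rw [smul_add, smul_smul, Complex.ofReal_inv, inv_mul_cancel₀ ht', one_smul]
    have hinv : (((t⁻¹ : ℝ) : ℂ) • R + E)⁻¹ = (t : ℂ) • (R + (t : ℂ) • E)⁻¹ := by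
      apply inv_eq_right_inv
      rw [hscale, smul_mul_smul_comm, mul_nonsing_inv _ hdet, Complex.ofReal_inv,
        inv_mul_cancel₀ ht', one_smul]
    refine ⟨(hR.smul (by exact_mod_cast inv_pos.2 ht)).add_posSemidef hE, ?_⟩
    rw [hinv, smul_mulVec, dotProduct_smul, smul_eq_mul, Complex.re_ofReal_mul]
  have hq := hp.trans hpq
  rw [(key p hp).2, (key q hq).2]
  refine re_dotProduct_inv_mulVec_lt (key q hq).1 ?_ hh
  rw [add_sub_add_right_eq_sub, ← sub_smul, ← Complex.ofReal_sub]
  exact hR.smul (by exact_mod_cast sub_pos.2 (inv_strictAnti₀ hp hpq))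

/-- The part of the interference-plus-noise covariance of user `k` that does not depend on the
power of user `k`. -/
def Rmat {K n : ℕ} (hhat : Fin K → Fin n → ℂ) (E : Fin K → Matrix (Fin n) (Fin n) ℂ)
    (Cz : Matrix (Fin n) (Fin n) ℂ) (k : Fin K) (P : Fin K → ℝ) :
    Matrix (Fin n) (Fin n) ℂ :=
  (∑ j ∈ Finset.univ.erase k, (P j : ℂ) • (vecMulVec (hhat j) (star (hhat j)) + E j)) + Cz

theorem Omat_eq_Rmat_add {K n : ℕ} (hhat : Fin K → Fin n → ℂ)
    (E : Fin K → Matrix (Fin n) (Fin n) ℂ) (Cz : Matrix (Fin n) (Fin n) ℂ) (k : Fin K)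
    (P : Fin K → ℝ) : Omat hhat E Cz k P = Rmat hhat E Cz k P + (P k : ℂ) • E k := by
  rw [Omat, Rmat, Dmat, ← Finset.sum_erase_add _ _ (Finset.mem_univ k)]
  simp only [smul_add, Finset.sum_add_distrib]
  abel

theorem Rmat_posDef {K n : ℕ} (hhat : Fin K → Fin n → ℂ)
    {E : Fin K → Matrix (Fin n) (Fin n) ℂ} (hE : ∀ j, (E j).PosSemidef)
    {Cz : Matrix (Fin n) (Fin n) ℂ} (hCz : Cz.PosDef) (k : Fin K)
    {P : Fin K → ℝ} (hP : ∀ j, 0 ≤ P j) : (Rmat hhat E Cz k P).PosDef :=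
  PosDef.posSemidef_add
    (posSemidef_sum _ fun j _ =>
      ((posSemidef_vecMulVec_self_star (hhat j)).add (hE j)).smul (by exact_mod_cast hP j)) hCz

/-- **Competitiveness, first part: the uplink SINR of user `k` is strictly increasing
in user `k`'s own transmit power.**  If `ĥ_k ≠ 0` and `P`, `Q` are strictly positive
power vectors with `Q_j = P_j` for all `j ≠ k` and `Q_k > P_k`, then
`SINR_k(Q) > SINR_k(P)`. -/
theorem SINR_strictMono_own_power {K n : ℕ}
    (hhat : Fin K → Fin n → ℂ)
    (E : Fin K → Matrix (Fin n) (Fin n) ℂ) (hE : ∀ j, (E j).PosSemidef)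
    (Cz : Matrix (Fin n) (Fin n) ℂ) (hCz : Cz.PosDef)
    (k : Fin K) (hk : hhat k ≠ 0)
    (P Q : Fin K → ℝ) (hP : ∀ j, 0 < P j) (hQ : ∀ j, 0 < Q j)
    (hPQ : ∀ j, j ≠ k → Q j = P j) (hQk : P k < Q k) :
    SINR hhat E Cz k P < SINR hhat E Cz k Q := by
  have hRmat : Rmat hhat E Cz k Q = Rmat hhat E Cz k P := by
    unfold Rmat
    congr 1
    exact Finset.sum_congr rfl fun j hj => by rw [hPQ j (Finset.ne_of_mem_erase hj)]
  rw [SINR, SINR, Omat_eq_Rmat_add, Omat_eq_Rmat_add, hRmat]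
  exact mul_re_dotProduct_inv_add_smul_lt (Rmat_posDef hhat hE hCz k fun j => (hP j).le) (hE k) hk
    (hP k) hQk

end
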